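/- arXiv:1707.06688 — 3 statements merged into one kernel-verified Lean document; each statement's English description precedes it below -/
import Mathlib

section
/- Let Λ ⊂ ℝ^n be a full-rank lattice, σ_s > 0, X ~ D_{Λ, σ_s}, and P_0(Λ) = Pr[X = 0] = ((2πσ_s²)^{n/2} · f_{σ_s}(Λ))^{−1}. Then (1/n)·H(X) ≤ −(1/n)·log P_0(Λ) + π·(1 − P_0(Λ)) + 1.8·e^{−1.7 n}/n. -/
open MeasureTheory Real Filter Pointwise
open scoped ENNReal RealInnerProductSpace

noncomputable section

/-- The (continuous) Gaussian density with parameter `σ` on `ℝⁿ`: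
`f_σ(x) = (2πσ²)^{-n/2} exp(-‖x‖²/(2σ²))`. -/
def gaussF (n : ℕ) (σ : ℝ) (x : EuclideanSpace ℝ (Fin n)) : ℝ :=
  (2 * π * σ ^ 2) ^ (-(n : ℝ) / 2) * Real.exp (-‖x‖ ^ 2 / (2 * σ ^ 2))

/-- The Gaussian mass `f_σ(S) = Σ_{y ∈ S} f_σ(y)` of a (countable) set `S ⊆ ℝⁿ`. -/
def gaussMass (n : ℕ) (σ : ℝ) (S : Set (EuclideanSpace ℝ (Fin n))) : ℝ :=
  ∑' y : S, gaussF n σ y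

/-- The Gaussian measure `N(0, σ² Iₙ)` on `ℝⁿ`, given by its density w.r.t. Lebesgue measure. -/
def gaussMeasure (n : ℕ) (σ : ℝ) : Measure (EuclideanSpace ℝ (Fin n)) :=
  volume.withDensity fun x => ENNReal.ofReal (gaussF n σ x)

/-- The coset `S + t` of a set `S ⊆ ℝⁿ`, i.e. `{x | x - t ∈ S}`. -/
def coset (n : ℕ) (S : Set (EuclideanSpace ℝ (Fin n))) (t : EuclideanSpace ℝ (Fin n)) :
    Set (EuclideanSpace ℝ (Fin n)) := {x | x - t ∈ S}

/-- The Voronoi cell of `S`: `{x | ⟪x,y⟫ ≤ ‖y‖²/2 for all y ∈ S}`. -/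
def voronoi (n : ℕ) (S : Set (EuclideanSpace ℝ (Fin n))) : Set (EuclideanSpace ℝ (Fin n)) :=
  {x | ∀ y ∈ S, ⟪x, y⟫ ≤ ‖y‖ ^ 2 / 2}

/-- The inverse error function `err⁻¹_ε(Λ)`: the least `s > 0` such that a standard Gaussian
leaves `s · V(Λ)` with probability at most `ε`. -/
def errInv (n : ℕ) (ε : ℝ) (S : Set (EuclideanSpace ℝ (Fin n))) : ℝ :=
  sInf {s : ℝ | 0 < s ∧ gaussMeasure n 1 ((s • voronoi n S)ᶜ) ≤ ENNReal.ofReal ε}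

/-- The Shannon entropy (in nats) of the discrete Gaussian `D_{S,σ}` supported on `S`,
which assigns mass `f_σ(y)/f_σ(S)` to each `y ∈ S`. -/
def dgEntropy (n : ℕ) (σ : ℝ) (S : Set (EuclideanSpace ℝ (Fin n))) : ℝ :=
  -∑' y : S, (gaussF n σ y / gaussMass n σ S) * Real.log (gaussF n σ y / gaussMass n σ S)

/-- The flatness factor `ε_Λ(σ) = sup_{x ∈ V(Λ)} |V(Λ)·f_σ(Λ+x) − 1|`. -/
def flatness (n : ℕ) (L : Submodule ℤ (EuclideanSpace ℝ (Fin n))) (σ : ℝ) : ℝ :=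
  ⨆ x : voronoi n (L : Set (EuclideanSpace ℝ (Fin n))),
    |ZLattice.covolume L volume *
        gaussMass n σ (coset n (L : Set (EuclideanSpace ℝ (Fin n))) x) - 1|

def Th (n : ℕ) (L : Submodule ℤ (EuclideanSpace ℝ (Fin n))) (a : ℝ) : ℝ≥0∞ :=
  ∑' y : L, ENNReal.ofReal (Real.exp (-a * ‖(y : EuclideanSpace ℝ (Fin n))‖ ^ 2))

lemma par_split {n : ℕ} {M : Type*} [AddCommGroup M] (b : Module.Basis (Fin n) ℤ M) (u v : M)
    (h : (fun i => ((b.repr u i : ℤ) : ZMod 2)) = fun i => ((b.repr v i : ℤ) : ZMod 2)) :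
    ∃ p : M × M, p.1 + p.2 = u ∧ p.1 - p.2 = v := by
  have h1 : ∀ i, ∃ k : ℤ, b.repr u i - b.repr v i = 2 * k := by
    intro i
    have := congrFun h i
    have h2 := (ZMod.intCast_eq_intCast_iff_dvd_sub _ _ 2).1 this.symm
    exact_mod_cast h2
  choose k hk using h1
  have huv : u - v = (2 : ℤ) • b.equivFun.symm k := by
    apply b.equivFun.injective
    rw [map_smul, LinearEquiv.apply_symm_apply]
    ext i
    simp [hk]
  refine ⟨(v + b.equivFun.symm k, b.equivFun.symm k), ?_, ?_⟩
  · have : u = v + (2 : ℤ) • b.equivFun.symm k := by rw [← huv]; abel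
    rw [two_smul] at this
    rw [this]
    exact add_assoc _ _ _
  · simp

lemma tsum_mul_prod {α : Type*} (f g : α → ℝ≥0∞) :
    (∑' u, f u) * (∑' v, g v) = ∑' p : α × α, f p.1 * g p.2 := by
  rw [ENNReal.tsum_prod (f := fun x y => f x * g y)]
  simp only [ENNReal.tsum_mul_left, ENNReal.tsum_mul_right]

lemma theta_step (n : ℕ) (L : Submodule ℤ (EuclideanSpace ℝ (Fin n)))
    [DiscreteTopology L] [IsZLattice ℝ L] (a : ℝ) :
    Th n L (a / 2) ^ 2 ≤ 2 ^ n * Th n L a ^ 2 := by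
  classical
  have : Module.Free ℤ L := ZLattice.module_free ℝ L
  have : Module.Finite ℤ L := ZLattice.module_finite ℝ L
  have hr : Module.finrank ℤ L = n := by
    rw [ZLattice.rank ℝ L]; simp
  let b : Module.Basis (Fin n) ℤ L := Module.finBasisOfFinrankEq ℤ L hr
  let par : L → (Fin n → ZMod 2) := fun u i => ((b.repr u i : ℤ) : ZMod 2)
  let h : L → ℝ≥0∞ := fun y => ENNReal.ofReal (Real.exp (-(a/2) * ‖(y : EuclideanSpace ℝ (Fin n))‖ ^ 2))
  let g : L → ℝ≥0∞ := fun y => ENNReal.ofReal (Real.exp (-a * ‖(y : EuclideanSpace ℝ (Fin n))‖ ^ 2))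
  let G : (Fin n → ZMod 2) → ℝ≥0∞ := fun q => ∑' u, if par u = q then h u else 0
  have hG : Th n L (a / 2) = ∑ q, G q := by
    simp only [G]
    rw [← Summable.tsum_finsetSum (fun _ _ => ENNReal.summable)]
    simp [Th, h]
  have hcs : (∑ q, G q) ^ 2 ≤ 2 ^ n * ∑ q, G q ^ 2 := by
    have := ENNReal.rpow_sum_le_const_mul_sum_rpow (Finset.univ : Finset (Fin n → ZMod 2)) G (p := 2) (by norm_num)
    norm_num at this
    simpa using this
  have hsq : ∑ q, G q ^ 2 ≤ Th n L a ^ 2 := by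
    have e1 : ∑ q, G q ^ 2 = ∑' p : L × L, if par p.1 = par p.2 then h p.1 * h p.2 else 0 := by
      have : ∀ q, G q ^ 2 = ∑' p : L × L, (if par p.1 = q then h p.1 else 0) * (if par p.2 = q then h p.2 else 0) := by
        intro q
        rw [sq]
        exact tsum_mul_prod _ _
      simp_rw [this]
      rw [← Summable.tsum_finsetSum (fun _ _ => ENNReal.summable)]
      congr 1; ext p
      simp [eq_comm]
    have e2 : Th n L a ^ 2 = ∑' p : L × L, g p.1 * g p.2 := by
      rw [sq]
      exact tsum_mul_prod _ _
    rw [e1, e2]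
    let S : Set (L × L) := {p | par p.1 = par p.2}
    have e3 : (∑' p : L × L, if par p.1 = par p.2 then h p.1 * h p.2 else 0)
        = ∑' p : S, h p.1.1 * h p.1.2 := by
      rw [tsum_subtype S (fun p => h p.1 * h p.2)]
      congr 1; ext p
      simp [S, Set.indicator_apply]
    rw [e3]
    have hS : ∀ p : S, ∃ r : L × L, r.1 + r.2 = p.1.1 ∧ r.1 - r.2 = p.1.2 := fun p =>
      par_split b p.1.1 p.1.2 p.2
    choose φ hφ1 hφ2 using hS
    have hinj : Function.Injective φ := by
      intro p p' hp
      apply Subtype.ext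
      apply Prod.ext
      · rw [← hφ1, ← hφ1, hp]
      · rw [← hφ2, ← hφ2, hp]
    refine le_trans (le_of_eq ?_) (ENNReal.tsum_comp_le_tsum_of_injective hinj (fun p => g p.1 * g p.2))
    congr 1; ext p
    simp only [h, g]
    rw [← hφ1, ← hφ2, ← ENNReal.ofReal_mul (by positivity), ← ENNReal.ofReal_mul (by positivity),
      ← Real.exp_add, ← Real.exp_add]
    congr 2
    have := parallelogram_law_with_norm ℝ ((φ p).1 : EuclideanSpace ℝ (Fin n)) (φ p).2
    push_cast
    linear_combination (-(a/2)) * this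
  rw [hG]
  exact hcs.trans (by gcongr)

lemma gauss_summable (n : ℕ) (L : Submodule ℤ (EuclideanSpace ℝ (Fin n)))
    [DiscreteTopology L] [IsZLattice ℝ L] (a : ℝ) (ha : 0 < a) :
    Summable fun y : L => Real.exp (-a * ‖(y : EuclideanSpace ℝ (Fin n))‖ ^ 2) := by
  have hr : Module.finrank ℤ L = n := by
    rw [ZLattice.rank ℝ L]; simp
  have h1 := ZLattice.summable_norm_pow_inv L (2 * (n + 1)) (by omega)
  have h2 := h1.mul_left (((n + 1).factorial : ℝ) / a ^ (n + 1))
  refine Summable.of_norm_bounded_eventually h2 ?_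
  have h0 : ∀ᶠ y : L in cofinite, y ≠ 0 := by
    simp [Filter.eventually_cofinite]
  filter_upwards [h0] with y hy
  have hy' : 0 < ‖y‖ := norm_pos_iff.2 hy
  rw [Real.norm_of_nonneg (by positivity)]
  change Real.exp (-a * ‖y‖ ^ 2) ≤ _
  have h3 := Real.pow_div_factorial_le_exp (a * ‖y‖ ^ 2) (by positivity) (n + 1)
  rw [neg_mul, Real.exp_neg]
  calc (Real.exp (a * ‖y‖ ^ 2))⁻¹ ≤ ((a * ‖y‖ ^ 2) ^ (n + 1) / ((n + 1).factorial : ℝ))⁻¹ := by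
        gcongr
    _ = _ := by
        rw [inv_div, mul_pow, ← pow_mul, inv_pow]
        field_simp

lemma theta_eight (n : ℕ) (L : Submodule ℤ (EuclideanSpace ℝ (Fin n)))
    [DiscreteTopology L] [IsZLattice ℝ L] (a : ℝ) (ha : 0 < a) :
    (∑' y : L, Real.exp (-(a / 8) * ‖(y : EuclideanSpace ℝ (Fin n))‖ ^ 2)) ^ 2 ≤
      8 ^ n * (∑' y : L, Real.exp (-a * ‖(y : EuclideanSpace ℝ (Fin n))‖ ^ 2)) ^ 2 := by
  have hT : ∀ c : ℝ, 0 < c → Th n L c =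
      ENNReal.ofReal (∑' y : L, Real.exp (-c * ‖(y : EuclideanSpace ℝ (Fin n))‖ ^ 2)) := by
    intro c hc
    rw [ENNReal.ofReal_tsum_of_nonneg (fun _ => by positivity) (gauss_summable n L c hc)]
    rfl
  have hnn : ∀ c : ℝ, 0 ≤ ∑' y : L, Real.exp (-c * ‖(y : EuclideanSpace ℝ (Fin n))‖ ^ 2) :=
    fun c => tsum_nonneg fun _ => by positivity
  have hs : ∀ c : ℝ, 0 < c →
      (∑' y : L, Real.exp (-(c / 2) * ‖(y : EuclideanSpace ℝ (Fin n))‖ ^ 2)) ^ 2 ≤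
      2 ^ n * (∑' y : L, Real.exp (-c * ‖(y : EuclideanSpace ℝ (Fin n))‖ ^ 2)) ^ 2 := by
    intro c hc
    have h := theta_step n L c
    rw [hT c hc, hT (c / 2) (by positivity), ← ENNReal.ofReal_pow (hnn _),
      ← ENNReal.ofReal_pow (hnn _),
      show (2 : ℝ≥0∞) ^ n = ENNReal.ofReal (2 ^ n) by
        rw [ENNReal.ofReal_pow (by norm_num)]; simp,
      ← ENNReal.ofReal_mul (by positivity)] at h
    exact (ENNReal.ofReal_le_ofReal_iff (by positivity)).1 h
  have h1 := hs a ha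
  have h2 := hs (a / 2) (by positivity)
  have h3 := hs (a / 2 / 2) (by positivity)
  rw [show a / 2 / 2 / 2 = a / 8 by ring] at h3
  have h8 : (8 : ℝ) ^ n = 2 ^ n * (2 ^ n * 2 ^ n) := by
    rw [← mul_pow, ← mul_pow]; norm_num
  rw [h8]
  refine h3.trans ?_
  rw [mul_assoc, mul_assoc]
  gcongr
  refine h2.trans ?_
  gcongr

lemma theta_tail (n : ℕ) (A B : ℝ) (hA : 0 ≤ A) (h : B ^ 2 ≤ 8 ^ n * A ^ 2) :
    Real.exp (-(7 / 8) * (π * n)) * B ≤ Real.exp (-1.7 * n) * A := by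
  refine (abs_le_of_sq_le_sq' ?_ (by positivity)).2
  have h8 : (8 : ℝ) ^ n = Real.exp (3 * Real.log 2 * n) := by
    rw [show 3 * Real.log 2 = Real.log 8 by
      rw [show (8 : ℝ) = 2 ^ 3 by norm_num, Real.log_pow]; norm_num, mul_comm, Real.exp_nat_mul,
      Real.exp_log (by norm_num)]
  calc (Real.exp (-(7 / 8) * (π * n)) * B) ^ 2
      = Real.exp (-(7 / 4) * (π * n)) * B ^ 2 := by
        rw [mul_pow, ← Real.exp_nat_mul]; congr 2; push_cast; ring
    _ ≤ Real.exp (-(7 / 4) * (π * n)) * (8 ^ n * A ^ 2) := by gcongr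
    _ = Real.exp (-(7 / 4) * (π * n) + 3 * Real.log 2 * n) * A ^ 2 := by
        rw [h8, Real.exp_add]; ring
    _ ≤ Real.exp (-3.4 * n) * A ^ 2 := by
        gcongr
        have := Real.log_two_lt_d9
        have := Real.pi_gt_d4
        have hn : (0 : ℝ) ≤ n := by positivity
        nlinarith
    _ = (Real.exp (-1.7 * n) * A) ^ 2 := by
        rw [mul_pow, ← Real.exp_nat_mul]; congr 2; push_cast; ring

lemma pointwise_bound (a t : ℝ) :
    t * Real.exp (-t) ≤ a * Real.exp (-t) +
      8 / 7 * Real.exp (-(7 / 8) * a) * Real.exp (-(t / 8)) := by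
  have h := Real.add_one_le_exp (7 / 8 * (t - a))
  have h2 : Real.exp (-(7 / 8) * a) * Real.exp (-(t / 8)) =
      Real.exp (7 / 8 * (t - a)) * Real.exp (-t) := by
    rw [← Real.exp_add, ← Real.exp_add]; congr 1; ring
  rw [mul_assoc, h2]
  have := Real.exp_pos (-t)
  nlinarith

/-- entropy bound in terms of the mass of zero:
`(1/n)H(X) ≤ −(1/n)log P₀(Λ) + π(1−P₀(Λ)) + 1.8·e^{−1.7n}/n`. -/
theorem entropy_vs_mass_of_zero (n : ℕ) (L : Submodule ℤ (EuclideanSpace ℝ (Fin n)))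
    [DiscreteTopology L] [IsZLattice ℝ L]
    (σs : ℝ) (hσs : 0 < σs)
    (P0 : ℝ)
    (hP0 : P0 = ((2 * π * σs ^ 2) ^ ((n : ℝ) / 2) * gaussMass n σs (L : Set (EuclideanSpace ℝ (Fin n))))⁻¹) :
    (1 / (n : ℝ)) * dgEntropy n σs (L : Set (EuclideanSpace ℝ (Fin n))) ≤
      -(1 / (n : ℝ)) * Real.log P0 + π * (1 - P0) +
        1.8 * Real.exp (-1.7 * n) / n := by
  classical
  set a : ℝ := 1 / (2 * σs ^ 2) with ha_def
  have ha : 0 < a := by positivity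
  let t : L → ℝ := fun y => a * ‖(y : EuclideanSpace ℝ (Fin n))‖ ^ 2
  have s1 : Summable fun y : L => Real.exp (-t y) := by
    simpa [t] using gauss_summable n L a ha
  have s8 : Summable fun y : L => Real.exp (-(t y / 8)) := by
    refine (gauss_summable n L (a / 8) (by positivity)).congr fun y => ?_
    congr 1; simp only [t]; ring
  set A : ℝ := ∑' y : L, Real.exp (-t y) with hA
  set B : ℝ := ∑' y : L, Real.exp (-(t y / 8)) with hB
  have hAB : B ^ 2 ≤ 8 ^ n * A ^ 2 := by
    have e1 : B = ∑' y : L, Real.exp (-(a / 8) * ‖(y : EuclideanSpace ℝ (Fin n))‖ ^ 2) :=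
      tsum_congr fun y => by congr 1; simp only [t]; ring
    have e2 : A = ∑' y : L, Real.exp (-a * ‖(y : EuclideanSpace ℝ (Fin n))‖ ^ 2) :=
      tsum_congr fun y => by congr 1; simp only [t]; ring
    rw [e1, e2]
    exact theta_eight n L a ha
  have ht0 : t 0 = 0 := by simp [t]
  have hA1 : 1 ≤ A := by
    have := s1.le_tsum 0 (fun _ _ => by positivity)
    simpa [ht0] using this
  have hA0 : 0 < A := by linarith
  have tail := theta_tail n A B hA0.le hAB
  -- the normalising constant
  set C : ℝ := (2 * π * σs ^ 2) ^ (-(n : ℝ) / 2) with hC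
  have hC0 : 0 < C := by positivity
  have hF : ∀ y : L, gaussF n σs (y : EuclideanSpace ℝ (Fin n)) = C * Real.exp (-t y) := by
    intro y
    simp only [gaussF, t, ha_def, hC]
    congr 2; ring
  have hmass : gaussMass n σs (L : Set (EuclideanSpace ℝ (Fin n))) = C * A := by
    rw [hA, ← tsum_mul_left]
    exact tsum_congr hF
  have hP : P0 = A⁻¹ := by
    rw [hP0, hmass, ← mul_assoc, hC, ← Real.rpow_add (by positivity)]
    rw [show (n : ℝ) / 2 + -(n : ℝ) / 2 = 0 by ring]
    simp
  -- pointwise bound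
  let r : L → ℝ := fun y => (π * n) * (Real.exp (-t y) - if y = 0 then 1 else 0) +
      8 / 7 * Real.exp (-(7 / 8) * (π * n)) * Real.exp (-(t y / 8))
  have hpt : ∀ y, t y * Real.exp (-t y) ≤ r y := by
    intro y
    by_cases hy : y = 0
    · subst hy
      simp only [r, ht0]
      simp
      positivity
    · simp only [r, hy, if_false, sub_zero]
      exact pointwise_bound _ _
  have hs0 : HasSum (fun y : L => if y = 0 then (1 : ℝ) else 0) 1 := hasSum_ite_eq 0 1
  have hrs : HasSum r ((π * n) * (A - 1) + 8 / 7 * Real.exp (-(7 / 8) * (π * n)) * B) :=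
    ((s1.hasSum.sub hs0).mul_left _).add (s8.hasSum.mul_left _)
  have st : Summable fun y => t y * Real.exp (-t y) :=
    Summable.of_nonneg_of_le (fun y => by positivity) hpt hrs.summable
  set E : ℝ := ∑' y, t y * Real.exp (-t y) with hE
  have hEle : E ≤ (π * n) * (A - 1) + 8 / 7 * Real.exp (-(7 / 8) * (π * n)) * B :=
    hasSum_le hpt st.hasSum hrs
  have hent : dgEntropy n σs (L : Set (EuclideanSpace ℝ (Fin n))) = E / A + Real.log A := by
    have hterm : ∀ y : L, (gaussF n σs (y : EuclideanSpace ℝ (Fin n)) / (C * A)) *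
        Real.log (gaussF n σs (y : EuclideanSpace ℝ (Fin n)) / (C * A)) =
        -(A⁻¹ * (t y * Real.exp (-t y)) + A⁻¹ * Real.log A * Real.exp (-t y)) := by
      intro y
      rw [hF, mul_div_mul_left _ _ hC0.ne', Real.log_div (by positivity) hA0.ne', Real.log_exp]
      field_simp
      ring
    have hsum : HasSum (fun y : L => -(A⁻¹ * (t y * Real.exp (-t y)) + A⁻¹ * Real.log A * Real.exp (-t y)))
        (-(A⁻¹ * E + A⁻¹ * Real.log A * A)) :=
      ((st.hasSum.mul_left _).add (s1.hasSum.mul_left _)).neg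
    have h3 : dgEntropy n σs (L : Set (EuclideanSpace ℝ (Fin n))) =
        -∑' y : L, -(A⁻¹ * (t y * Real.exp (-t y)) + A⁻¹ * Real.log A * Real.exp (-t y)) := by
      unfold dgEntropy
      rw [hmass]
      congr 1
      exact tsum_congr hterm
    rw [h3, hsum.tsum_eq]
    field_simp
  rw [hent, hP, Real.log_inv]
  rcases Nat.eq_zero_or_pos n with hn | hn
  · subst hn
    have : 0 ≤ 1 - A⁻¹ := by
      have := inv_le_one_of_one_le₀ hA1
      linarith
    simp
    exact mul_nonneg Real.pi_pos.le this
  · have hn' : (0 : ℝ) < n := by exact_mod_cast hn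
    have key : E / A ≤ π * n * (1 - A⁻¹) + 1.8 * Real.exp (-1.7 * n) := by
      rw [div_le_iff₀ hA0]
      have e1 : (π * n * (1 - A⁻¹) + 1.8 * Real.exp (-1.7 * n)) * A =
          π * n * (A - 1) + 1.8 * (Real.exp (-1.7 * n) * A) := by
        field_simp
      rw [e1]
      have : 0 ≤ Real.exp (-1.7 * n) * A := by positivity
      nlinarith
    have e2 : -(1 / (n : ℝ)) * -Real.log A + π * (1 - A⁻¹) + 1.8 * Real.exp (-1.7 * n) / n
        = (1 / (n : ℝ)) * ((π * n * (1 - A⁻¹) + 1.8 * Real.exp (-1.7 * n)) + Real.log A) := by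
      field_simp
      ring
    rw [e2]
    gcongr
end
end

section
/- Let Λ ⊂ ℝ^n be a full-rank lattice, σ_s > 0, X ~ D_{Λ, σ_s}, and P_0(Λ) = Pr[X = 0] = ((2πσ_s²)^{n/2} · f_{σ_s}(Λ))^{−1}. Then for every real a > 1, setting φ(a) = 1 − (1/(2a))·log(2ae), one has (1/n)·H(X) ≤ −(1/n)·log P_0(Λ) + a·(1 − P_0(Λ)) + e^{−a·φ(a)·n}/(n·φ(a)). -/
open MeasureTheory Real Filter Pointwise
open scoped ENNReal RealInnerProductSpace

noncomputable section

namespace EntropyAux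

/-- The unnormalised Gaussian, valued in `ℝ≥0∞`. -/
def gE {n : ℕ} (b : ℝ) (x : EuclideanSpace ℝ (Fin n)) : ℝ≥0∞ :=
  ENNReal.ofReal (Real.exp (-b * ‖x‖ ^ 2))

/-- The periodised Gaussian, valued in `ℝ≥0∞`. -/
def gT {n : ℕ} (L : Submodule ℤ (EuclideanSpace ℝ (Fin n))) (b : ℝ)
    (x : EuclideanSpace ℝ (Fin n)) : ℝ≥0∞ := ∑' z : L, gE b (x + (z : EuclideanSpace ℝ (Fin n)))

lemma measurable_gE {n : ℕ} (b : ℝ) : Measurable (gE (n := n) b) := by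
  unfold gE; fun_prop

lemma measurable_gT {n : ℕ} (L : Submodule ℤ (EuclideanSpace ℝ (Fin n))) [Countable L] (b : ℝ) :
    Measurable (gT L b) := by
  unfold gT
  refine Measurable.ennreal_tsum fun z => ?_
  exact (measurable_gE b).comp (measurable_id.add_const _)

lemma gT_add {n : ℕ} (L : Submodule ℤ (EuclideanSpace ℝ (Fin n))) (b : ℝ)
    (x : EuclideanSpace ℝ (Fin n)) (w : L) : gT L b (x + w) = gT L b x := by
  unfold gT
  rw [← (Equiv.addLeft w).tsum_eq (fun z : L => gE b (x + (z : EuclideanSpace ℝ (Fin n))))]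
  refine tsum_congr fun z => ?_
  simp [add_assoc]

lemma gE_mul {n : ℕ} {b c : ℝ} (hb : 0 < b) (hc : 0 < c) (x w : EuclideanSpace ℝ (Fin n)) :
    gE c x * gE b (x + w) = gE (b * c / (b + c)) w * gE (b + c) (x + (b / (b + c)) • w) := by
  unfold gE
  rw [← ENNReal.ofReal_mul (by positivity), ← ENNReal.ofReal_mul (by positivity),
    ← Real.exp_add, ← Real.exp_add]
  congr 2
  rw [norm_add_sq_real, norm_add_sq_real, inner_smul_right, norm_smul, mul_pow]
  rw [Real.norm_eq_abs, sq_abs]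
  have : b + c ≠ 0 := by positivity
  field_simp
  ring

lemma lintegral_gE {n : ℕ} {b : ℝ} (hb : 0 < b) :
    ∫⁻ x : EuclideanSpace ℝ (Fin n), gE b x = ENNReal.ofReal ((π / b) ^ ((n : ℝ) / 2)) := by
  unfold gE
  have h := GaussianFourier.integral_rexp_neg_mul_sq_norm (V := EuclideanSpace ℝ (Fin n)) hb
  rw [finrank_euclideanSpace_fin] at h
  rw [← h, ofReal_integral_eq_lintegral_ofReal]
  · by_contra hne
    rw [integral_undef hne] at h
    have : 0 < (π / b) ^ ((n : ℝ) / 2) := by positivity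
    linarith
  · exact Eventually.of_forall fun x => by positivity

lemma lintegral_conv {n : ℕ} {b c : ℝ} (hb : 0 < b) (hc : 0 < c) (w : EuclideanSpace ℝ (Fin n)) :
    ∫⁻ x, gE c x * gE b (x + w) =
      gE (b * c / (b + c)) w * ENNReal.ofReal ((π / (b + c)) ^ ((n : ℝ) / 2)) := by
  simp_rw [gE_mul hb hc]
  have hm : Measurable fun x : EuclideanSpace ℝ (Fin n) =>
      gE (b + c) (x + (b / (b + c)) • w) := (measurable_gE _).comp (measurable_id.add_const _)
  rw [lintegral_const_mul _ hm,
    lintegral_add_right_eq_self, lintegral_gE (by positivity)]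

lemma lintegral_conv_gT {n : ℕ} (L : Submodule ℤ (EuclideanSpace ℝ (Fin n))) [Countable L]
    {b c : ℝ} (hb : 0 < b) (hc : 0 < c) (w : EuclideanSpace ℝ (Fin n)) :
    ∫⁻ x, gE c x * gT L b (x + w) =
      gT L (b * c / (b + c)) w * ENNReal.ofReal ((π / (b + c)) ^ ((n : ℝ) / 2)) := by
  unfold gT
  simp_rw [← ENNReal.tsum_mul_left, ← ENNReal.tsum_mul_right]
  rw [lintegral_tsum]
  · refine tsum_congr fun z => ?_
    simp_rw [add_assoc]
    exact lintegral_conv hb hc _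
  · intro z
    exact ((measurable_gE _).mul ((measurable_gE b).comp
      ((measurable_id.add_const _).add_const _))).aemeasurable

lemma unfold_dom {n : ℕ} (L : Submodule ℤ (EuclideanSpace ℝ (Fin n)))
    [DiscreteTopology L] [IsZLattice ℝ L] :
    ∃ F : Set (EuclideanSpace ℝ (Fin n)), ∀ b : ℝ, ∀ u v : EuclideanSpace ℝ (Fin n),
      ∫⁻ y in F, gT L b (y + u) * gT L b (y + v) = ∫⁻ y, gE b (y + u) * gT L b (y + v) := by
  have hF := ZLattice.isAddFundamentalDomain (Module.Free.chooseBasis ℤ L) 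
    (volume : Measure (EuclideanSpace ℝ (Fin n)))
  refine ⟨ZSpan.fundamentalDomain ((Module.Free.chooseBasis ℤ L).ofZLatticeBasis ℝ L),
    fun b u v => ?_⟩
  · have : VAddInvariantMeasure L (EuclideanSpace ℝ (Fin n)) volume :=
      ⟨fun c s _ => measure_preimage_add volume (c : EuclideanSpace ℝ (Fin n)) s⟩
    rw [hF.lintegral_eq_tsum'']
    have : ∀ y, gT L b (y + u) * gT L b (y + v)
        = ∑' z : L, gE b ((z +ᵥ y) + u) * gT L b ((z +ᵥ y) + v) := by
      intro y
      conv_lhs => rw [gT, ← ENNReal.tsum_mul_right]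
      refine tsum_congr fun z => ?_
      have e1 : (z +ᵥ y : EuclideanSpace ℝ (Fin n)) = y + z := by
        rw [Submodule.vadd_def, vadd_eq_add, add_comm]
      rw [e1, add_right_comm y (z : EuclideanSpace ℝ (Fin n)) v, gT_add,
        add_right_comm]
    simp_rw [this]
    rw [lintegral_tsum]
    · intro z
      refine Measurable.aemeasurable ?_
      exact ((measurable_gE b).comp ((measurable_const_vadd z).add_const _)).mul
        ((measurable_gT L b).comp ((measurable_const_vadd z).add_const _))

lemma enn_two_mul_le (p q : ℝ≥0∞) : 2 * (p * q) ≤ p * p + q * q := by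
  rcases le_total p q with h | h
  · obtain ⟨d, rfl⟩ := exists_add_of_le h
    calc 2 * (p * (p + d)) ≤ 2 * (p * (p + d)) + d * d := le_self_add
      _ = _ := by ring
  · obtain ⟨d, rfl⟩ := exists_add_of_le h
    calc 2 * ((q + d) * q) ≤ 2 * ((q + d) * q) + d * d := le_self_add
      _ = _ := by ring

lemma gT_le {n : ℕ} (L : Submodule ℤ (EuclideanSpace ℝ (Fin n)))
    [DiscreteTopology L] [IsZLattice ℝ L] {b : ℝ} (hb : 0 < b) (x : EuclideanSpace ℝ (Fin n)) :
    gT L b x ≤ gT L b 0 := by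
  obtain ⟨F, hF⟩ := unfold_dom L
  set K := ENNReal.ofReal ((π / (2 * b + 2 * b)) ^ ((n : ℝ) / 2)) with hK
  have hK0 : K ≠ 0 := by
    rw [hK]; simp only [ne_eq, ENNReal.ofReal_eq_zero, not_le]; positivity
  have hKt : K ≠ ⊤ := ENNReal.ofReal_ne_top
  have hb2 : 0 < 2 * b := by positivity
  have key : ∀ u v : EuclideanSpace ℝ (Fin n),
      ∫⁻ y in F, gT L (2 * b) (y + u) * gT L (2 * b) (y + v) = gT L b (v - u) * K := by
    intro u v
    rw [hF, ← lintegral_add_right_eq_self _ (-u)]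
    have := lintegral_conv_gT L hb2 hb2 (v - u)
    rw [show 2 * b * (2 * b) / (2 * b + 2 * b) = b by field_simp; ring] at this
    rw [← this]
    congr 1; ext y
    congr 2 <;> abel
  have h00 := key 0 0
  have hxx := key x x
  have h0x := key 0 x
  simp only [sub_self, sub_zero] at h00 hxx h0x
  have hle : 2 * (gT L b x * K) ≤ 2 * (gT L b 0 * K) := by
    rw [two_mul (gT L b 0 * K)]
    nth_rewrite 1 [← h00]
    rw [← hxx, ← h0x]
    have m : ∀ u, Measurable fun y => gT L (2 * b) (y + u) := fun u =>
      (measurable_gT L _).comp (measurable_id.add_const _)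
    have m1 : Measurable fun y => gT L (2 * b) (y + 0) * gT L (2 * b) (y + x) := (m 0).mul (m x)
    have m2 : Measurable fun y => gT L (2 * b) (y + 0) * gT L (2 * b) (y + 0) := (m 0).mul (m 0)
    rw [← lintegral_const_mul _ m1, ← lintegral_add_left m2]
    refine lintegral_mono fun y => ?_
    generalize gT L (2 * b) (y + 0) = p
    generalize gT L (2 * b) (y + x) = q
    exact enn_two_mul_le p q
  rwa [ENNReal.mul_le_mul_iff_right (by simp) (by simp),
    ENNReal.mul_le_mul_iff_left hK0 hKt] at hle

lemma gT_scale {n : ℕ} (L : Submodule ℤ (EuclideanSpace ℝ (Fin n)))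
    [DiscreteTopology L] [IsZLattice ℝ L] {b r : ℝ} (hb : 0 < b) (hr : 0 < r) (hr1 : r < 1) :
    gT L (r * b) 0 ≤ gT L b 0 * ENNReal.ofReal (r⁻¹ ^ ((n : ℝ) / 2)) := by
  have h1r : 0 < 1 - r := by linarith
  set c := r * b / (1 - r) with hc
  have hc0 : 0 < c := by positivity
  have e1 : b + c = b / (1 - r) := by rw [hc]; field_simp; ring
  have e2 : b * c / (b + c) = r * b := by rw [e1, hc]; field_simp
  have h := lintegral_conv_gT L hb hc0 0
  have h2 : ∫⁻ x, gE c x * gT L b (x + 0) ≤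
      gT L b 0 * ENNReal.ofReal ((π / c) ^ ((n : ℝ) / 2)) := by
    rw [← lintegral_gE hc0, ← lintegral_const_mul _ (measurable_gE c)]
    refine lintegral_mono fun x => ?_
    rw [mul_comm (gT L b 0)]
    gcongr
    exact gT_le L hb _
  rw [h, e2] at h2
  have e3 : (π / c) ^ ((n : ℝ) / 2) = r⁻¹ ^ ((n : ℝ) / 2) * (π / (b + c)) ^ ((n : ℝ) / 2) := by
    rw [← Real.mul_rpow (by positivity) (by positivity)]
    congr 1
    rw [e1, hc]; field_simp
  rw [e3, ENNReal.ofReal_mul (by positivity), ← mul_assoc] at h2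
  rwa [ENNReal.mul_le_mul_iff_left _ ENNReal.ofReal_ne_top] at h2
  simp only [ne_eq, ENNReal.ofReal_eq_zero, not_le]; positivity

lemma summable_gauss {n : ℕ} (L : Submodule ℤ (EuclideanSpace ℝ (Fin n)))
    [DiscreteTopology L] [IsZLattice ℝ L] {b : ℝ} (hb : 0 < b) :
    Summable fun z : L => Real.exp (-(b * ‖(z : EuclideanSpace ℝ (Fin n))‖ ^ 2)) := by
  set d := Module.finrank ℤ L + 1 with hd
  have hs : Summable fun z : L => ‖z‖⁻¹ ^ (2 * d) :=
    ZLattice.summable_norm_pow_inv L (2 * d) (by omega)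
  have hs2 : Summable fun z : L => (d.factorial / b ^ d : ℝ) * ‖z‖⁻¹ ^ (2 * d) := hs.mul_left _
  refine Summable.of_norm_bounded_eventually hs2 ?_
  refine (Set.finite_singleton (0 : L)).subset ?_
  intro z hz
  by_contra hne
  apply hz
  have hz0 : 0 < ‖z‖ := norm_pos_iff.mpr hne
  have hp : 0 < b * ‖(z : EuclideanSpace ℝ (Fin n))‖ ^ 2 := by
    have : 0 < ‖(z : EuclideanSpace ℝ (Fin n))‖ := hz0
    positivity
  have h := Real.pow_div_factorial_le_exp _ hp.le d
  change ‖Real.exp (-(b * ‖(z : EuclideanSpace ℝ (Fin n))‖ ^ 2))‖ ≤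
    (d.factorial / b ^ d : ℝ) * ‖z‖⁻¹ ^ (2 * d)
  rw [Real.norm_eq_abs, abs_of_pos (Real.exp_pos _), Real.exp_neg]
  rw [show (d.factorial / b ^ d : ℝ) * ‖z‖⁻¹ ^ (2 * d)
    = ((b * ‖(z : EuclideanSpace ℝ (Fin n))‖ ^ 2) ^ d / d.factorial)⁻¹ from ?_]
  · gcongr
  · rw [inv_div, mul_pow, ← pow_mul, inv_pow]
    rw [← Submodule.coe_norm]
    field_simp

lemma tsum_scale {n : ℕ} (L : Submodule ℤ (EuclideanSpace ℝ (Fin n)))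
    [DiscreteTopology L] [IsZLattice ℝ L] {b r : ℝ} (hb : 0 < b) (hr : 0 < r) (hr1 : r < 1) :
    ∑' z : L, Real.exp (-(r * b * ‖(z : EuclideanSpace ℝ (Fin n))‖ ^ 2)) ≤
      r⁻¹ ^ ((n : ℝ) / 2) * ∑' z : L, Real.exp (-(b * ‖(z : EuclideanSpace ℝ (Fin n))‖ ^ 2)) := by
  have conv : ∀ b : ℝ, 0 < b → gT L b 0 =
      ENNReal.ofReal (∑' z : L, Real.exp (-(b * ‖(z : EuclideanSpace ℝ (Fin n))‖ ^ 2))) := by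
    intro b hb
    rw [ENNReal.ofReal_tsum_of_nonneg (fun _ => by positivity) (summable_gauss L hb)]
    simp [gT, gE]
  have h := gT_scale L hb hr hr1
  have hnn : 0 ≤ ∑' z : L, Real.exp (-(b * ‖(z : EuclideanSpace ℝ (Fin n))‖ ^ 2)) :=
    tsum_nonneg fun _ => by positivity
  rw [conv _ hb, conv _ (by positivity), ← ENNReal.ofReal_mul hnn,
    ENNReal.ofReal_le_ofReal_iff (by positivity)] at h
  linarith

end EntropyAux

open EntropyAux

/-- general entropy bound in terms of the mass of zero: for every `a > 1`,
with `φ(a) = 1 − (1/2a)·log(2ae)`,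
`(1/n)H(X) ≤ −(1/n)log P₀(Λ) + a(1−P₀(Λ)) + e^{−aφ(a)n}/(nφ(a))`. -/
theorem entropy_vs_mass_of_zero_general (n : ℕ) (L : Submodule ℤ (EuclideanSpace ℝ (Fin n)))
    [DiscreteTopology L] [IsZLattice ℝ L]
    (σs : ℝ) (hσs : 0 < σs)
    (P0 : ℝ)
    (hP0 : P0 = ((2 * π * σs ^ 2) ^ ((n : ℝ) / 2) * gaussMass n σs (L : Set (EuclideanSpace ℝ (Fin n))))⁻¹)
    (a : ℝ) (ha : 1 < a)
    (φ : ℝ) (hφ : φ = 1 - (1 / (2 * a)) * Real.log (2 * a * Real.exp 1)) :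
    (1 / (n : ℝ)) * dgEntropy n σs (L : Set (EuclideanSpace ℝ (Fin n))) ≤
      -(1 / (n : ℝ)) * Real.log P0 + a * (1 - P0) +
        Real.exp (-a * φ * n) / (n * φ) := by
  set b : ℝ := 1 / (2 * σs ^ 2) with hb
  have hb0 : 0 < b := by positivity
  let Z : L → ℝ := fun z => b * ‖(z : EuclideanSpace ℝ (Fin n))‖ ^ 2
  have hZ0 : ∀ z, 0 ≤ Z z := fun z => by positivity
  set S : ℝ := ∑' z : L, Real.exp (-Z z) with hS
  have hsum : Summable fun z : L => Real.exp (-Z z) := summable_gauss L hb0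
  have hSge : 1 ≤ S := by
    have := hsum.le_tsum (0 : L) (fun _ _ => by positivity)
    simpa [Z] using this
  have hSpos : 0 < S := by linarith
  set C : ℝ := (2 * π * σs ^ 2) ^ (-(n : ℝ) / 2) with hC
  have hCpos : 0 < C := by positivity
  have hgF : ∀ z : L, gaussF n σs z = C * Real.exp (-Z z) := by
    intro z
    simp only [gaussF, Z, hb]
    congr 2
    field_simp
  have hmass : gaussMass n σs (L : Set (EuclideanSpace ℝ (Fin n))) = C * S := by
    rw [hS, ← tsum_mul_left]
    exact tsum_congr hgF
  have hP : P0 = S⁻¹ := by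
    rw [hP0, hmass, ← mul_assoc, hC, ← Real.rpow_add (by positivity)]
    rw [show (n : ℝ) / 2 + -(n : ℝ) / 2 = 0 by ring]
    simp
  have hP1 : P0 ≤ 1 := by rw [hP]; exact inv_le_one_of_one_le₀ hSge
  have hlogP : Real.log P0 = -Real.log S := by rw [hP, Real.log_inv]
  rcases Nat.eq_zero_or_pos n with hn | hn
  · have : (n : ℝ) = 0 := by exact_mod_cast hn
    rw [this]
    simp
    nlinarith
  have hn' : (0 : ℝ) < n := by exact_mod_cast hn
  -- exponent
  set s : ℝ := 1 - 1 / (2 * a) with hs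
  have hr0 : 0 < 1 / (2 * a) := by positivity
  have hr1 : 1 / (2 * a) < 1 := by rw [div_lt_one (by positivity)]; linarith
  have hs0 : 0 < s := by linarith
  have hlog : Real.log (2 * a * Real.exp 1) = Real.log (2 * a) + 1 := by
    rw [Real.log_mul (by positivity) (by positivity), Real.log_exp]
  have hφs : φ ≤ s := by
    rw [hφ, hlog, hs]
    have : 0 ≤ Real.log (2 * a) := Real.log_nonneg (by linarith)
    have : 0 ≤ 1 / (2 * a) * Real.log (2 * a) := by positivity
    linarith
  have hφ0 : 0 < φ := by
    have h1 : Real.log (2 * a) < 2 * a - 1 :=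
      Real.log_lt_sub_one_of_pos (by positivity) (by linarith)
    rw [hφ, hlog]
    have : 1 / (2 * a) * (Real.log (2 * a) + 1) < 1 / (2 * a) * (2 * a) := by
      gcongr; linarith
    rw [one_div_mul_cancel (by positivity)] at this
    linarith
  have hexp : Real.exp (-(s * (a * n))) * (1 / (2 * a))⁻¹ ^ ((n : ℝ) / 2)
      = Real.exp (-a * φ * n) := by
    rw [one_div, inv_inv, Real.rpow_def_of_pos (by positivity), ← Real.exp_add]
    congr 1
    rw [hφ, hlog, hs]
    field_simp
    ring
  -- the tail sum
  have hsumr : Summable fun z : L => Real.exp (-(1 / (2 * a) * Z z)) := by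
    have := summable_gauss L (b := 1 / (2 * a) * b) (by positivity)
    simpa [Z, mul_assoc] using this
  have hscale : ∑' z : L, Real.exp (-(1 / (2 * a) * Z z)) ≤ (1 / (2 * a))⁻¹ ^ ((n : ℝ) / 2) * S := by
    have := tsum_scale L hb0 hr0 hr1
    simpa [Z, hS, mul_assoc] using this
  set D : ℝ := Real.exp (-(s * (a * n))) / s with hD
  classical
  let G : L → ℝ := fun z => a * n * (Real.exp (-Z z) - if z = 0 then 1 else 0) +
    D * Real.exp (-(1 / (2 * a) * Z z))
  have hind : HasSum (fun z : L => if z = 0 then (1 : ℝ) else 0) 1 := hasSum_ite_eq 0 1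
  have hG : HasSum G (a * n * (S - 1) + D * ∑' z : L, Real.exp (-(1 / (2 * a) * Z z))) :=
    ((hsum.hasSum.sub hind).mul_left _).add (hsumr.hasSum.mul_left _)
  have hpt : ∀ z, Z z * Real.exp (-Z z) ≤ G z := by
    intro z
    have hE : D * Real.exp (-(1 / (2 * a) * Z z))
        = Real.exp (s * (Z z - a * n)) / s * Real.exp (-Z z) := by
      rw [hD, div_mul_eq_mul_div, div_mul_eq_mul_div (Real.exp (s * (Z z - a * n))), ← Real.exp_add, ← Real.exp_add]
      congr 2
      rw [hs]; ring
    by_cases hz : z = 0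
    · have : Z z = 0 := by simp [Z, hz]
      have hD0 : 0 ≤ D := by positivity
      simp only [G, this]
      simp [hz, hD0]
    · simp only [G, hz, if_false, sub_zero, hE]
      rw [← add_mul]
      gcongr
      have h1 := Real.add_one_le_exp (s * (Z z - a * n))
      have h2 : Z z - a * n ≤ Real.exp (s * (Z z - a * n)) / s := by
        rw [le_div_iff₀ hs0]; linarith
      linarith
  have hsumZ : Summable fun z : L => Z z * Real.exp (-Z z) :=
    Summable.of_nonneg_of_le (fun z => mul_nonneg (hZ0 z) (by positivity)) hpt hG.summable
  have hEZ : ∑' z : L, Z z * Real.exp (-Z z) ≤ a * n * (S - 1) + D * ((1 / (2 * a))⁻¹ ^ ((n : ℝ) / 2) * S) := by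
    calc _ ≤ ∑' z, G z := hsumZ.tsum_le_tsum hpt hG.summable
      _ = _ := hG.tsum_eq
      _ ≤ _ := by
        have : 0 ≤ D := by positivity
        gcongr
  have hent : dgEntropy n σs (L : Set (EuclideanSpace ℝ (Fin n))) =
      Real.log S + (∑' z : L, Z z * Real.exp (-Z z)) / S := by
    have hterm : ∀ z : L, (gaussF n σs z / gaussMass n σs (L : Set (EuclideanSpace ℝ (Fin n)))) *
        Real.log (gaussF n σs z / gaussMass n σs (L : Set (EuclideanSpace ℝ (Fin n)))) =
        -(Real.log S / S * Real.exp (-Z z) + 1 / S * (Z z * Real.exp (-Z z))) := by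
      intro z
      rw [hgF, hmass, mul_div_mul_left _ _ hCpos.ne', Real.log_div (by positivity) (by positivity),
        Real.log_exp]
      ring
    have : HasSum (fun z : L => -(Real.log S / S * Real.exp (-Z z) + 1 / S * (Z z * Real.exp (-Z z))))
        (-(Real.log S / S * S + 1 / S * ∑' z : L, Z z * Real.exp (-Z z))) :=
      ((hsum.hasSum.mul_left _).add (hsumZ.hasSum.mul_left _)).neg
    unfold dgEntropy
    have e := (tsum_congr hterm).trans this.tsum_eq
    have e' : ∑' y : (L : Set (EuclideanSpace ℝ (Fin n))),
        (gaussF n σs y / gaussMass n σs (L : Set (EuclideanSpace ℝ (Fin n)))) *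
        Real.log (gaussF n σs y / gaussMass n σs (L : Set (EuclideanSpace ℝ (Fin n)))) = _ := e
    rw [e']
    field_simp
  rw [hent, hlogP]
  have hfin : (∑' z : L, Z z * Real.exp (-Z z)) / S ≤ a * n * (1 - P0) + Real.exp (-a * φ * n) / φ := by
    have h1 : (∑' z : L, Z z * Real.exp (-Z z)) / S ≤ a * n * (1 - P0) + Real.exp (-a * φ * n) / s := by
      rw [div_le_iff₀ hSpos]
      refine hEZ.trans (le_of_eq ?_)
      rw [← hexp, hP, hD]
      field_simp
    refine h1.trans ?_
    gcongr
  have : 1 / (n : ℝ) * ((∑' z : L, Z z * Real.exp (-Z z)) / S) ≤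
      1 / (n : ℝ) * (a * n * (1 - P0) + Real.exp (-a * φ * n) / φ) := by gcongr
  have e : 1 / (n : ℝ) * (a * n * (1 - P0) + Real.exp (-a * φ * n) / φ)
    = a * (1 - P0) + Real.exp (-a * φ * n) / (n * φ) := by field_simp
  rw [e] at this
  linarith
end
end

section
/- Let Λ ⊂ ℝ^n be a full-rank lattice, σ_s, σ_w > 0, α = σ_s²/(σ_s²+σ_w²) and σ_eff² = σ_s²σ_w²/(σ_s²+σ_w²). Then f_{σ_s}(Λ) = ∫_{ℝ^n} f_{σ_eff}(w) · f_{√α·σ_s}(Λ + w) dw = ∫_{V(Λ)} f_{σ_eff}(Λ + w) · f_{√α·σ_s}(Λ + w) dw, where the second integral is over the Voronoi cell of Λ. -/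
open MeasureTheory Real Filter Pointwise
open scoped ENNReal RealInnerProductSpace

noncomputable section

/-- Ambient Euclidean space. -/
abbrev EE (n : ℕ) := EuclideanSpace ℝ (Fin n)

lemma gaussF_nonneg (n : ℕ) (σ : ℝ) (x : EE n) : 0 ≤ gaussF n σ x := by
  unfold gaussF; positivity

lemma gaussF_continuous (n : ℕ) (σ : ℝ) : Continuous (gaussF n σ) := by
  unfold gaussF; fun_prop

lemma gaussMass_coset (n : ℕ) (σ : ℝ) (L : Submodule ℤ (EE n)) (w : EE n) :
    gaussMass n σ (coset n (L : Set (EE n)) w) =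
      (∑' y : L, ENNReal.ofReal (gaussF n σ (y + w))).toReal := by
  rw [ENNReal.tsum_toReal_eq (fun _ => ENNReal.ofReal_ne_top)]
  let e : L ≃ coset n (L : Set (EE n)) w :=
    { toFun := fun y => ⟨y + w, by simp [coset]⟩
      invFun := fun x => ⟨x - w, x.2⟩
      left_inv := fun y => by simp
      right_inv := fun x => by simp }
  unfold gaussMass
  rw [← e.tsum_eq]
  refine tsum_congr fun y => ?_
  rw [ENNReal.toReal_ofReal (gaussF_nonneg _ _ _)]
  rfl

lemma gaussMass_lattice (n : ℕ) (σ : ℝ) (L : Submodule ℤ (EE n)) :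
    gaussMass n σ (L : Set (EE n)) = (∑' y : L, ENNReal.ofReal (gaussF n σ y)).toReal := by
  rw [ENNReal.tsum_toReal_eq (fun _ => ENNReal.ofReal_ne_top)]
  refine tsum_congr fun y => ?_
  rw [ENNReal.toReal_ofReal (gaussF_nonneg _ _ _)]

lemma gaussF_summable (n : ℕ) (σ : ℝ) (hσ : 0 < σ) (L : Submodule ℤ (EE n))
    [DiscreteTopology L] [IsZLattice ℝ L] : Summable fun y : L => gaussF n σ y := by
  unfold gaussF
  refine Summable.mul_left _ ?_
  have hr : Module.finrank ℤ L < 2 * (n + 1) := by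
    rw [ZLattice.rank ℝ L]; simp; omega
  have hs := (ZLattice.summable_norm_pow_inv L _ hr).mul_left
    (((n + 1).factorial : ℝ) * (2 * σ ^ 2) ^ (n + 1))
  refine Summable.of_norm_bounded_eventually hs ?_
  rw [Filter.eventually_cofinite]
  refine (Set.finite_singleton (0 : L)).subset ?_
  intro y hy
  by_contra h0
  apply hy
  have hy0 : 0 < ‖(y : EE n)‖ := by
    rw [norm_pos_iff]; simpa using h0
  have hu : 0 < ‖(y : EE n)‖ ^ 2 / (2 * σ ^ 2) := by positivity
  have h := Real.pow_div_factorial_le_exp _ hu.le (n + 1)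
  rw [Real.norm_of_nonneg (by positivity), neg_div, Real.exp_neg]
  refine (inv_anti₀ (by positivity) h).trans (le_of_eq ?_)
  have : ‖y‖ = ‖(y : EE n)‖ := rfl
  rw [this, pow_mul, inv_pow, div_pow, inv_pow]
  field_simp

lemma gauss_complete_square (n : ℕ) (s e t : ℝ) (hs : 0 < s) (he : 0 < e) (ht : 0 < t)
    (h : e ^ 2 + t ^ 2 = s ^ 2) (y w : EE n) :
    gaussF n e w * gaussF n t (y + w) =
      gaussF n s y * gaussF n (e * t / s) (w + (e ^ 2 / s ^ 2) • y) := by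
  unfold gaussF
  have h1 : (2 * π * e ^ 2) ^ (-(n : ℝ) / 2) * (2 * π * t ^ 2) ^ (-(n : ℝ) / 2) =
      (2 * π * s ^ 2) ^ (-(n : ℝ) / 2) * (2 * π * (e * t / s) ^ 2) ^ (-(n : ℝ) / 2) := by
    rw [← Real.mul_rpow (by positivity) (by positivity),
      ← Real.mul_rpow (by positivity) (by positivity)]
    congr 1
    field_simp
  have h2 : -‖w‖ ^ 2 / (2 * e ^ 2) + -‖y + w‖ ^ 2 / (2 * t ^ 2) =
      -‖y‖ ^ 2 / (2 * s ^ 2) + -‖w + (e ^ 2 / s ^ 2) • y‖ ^ 2 / (2 * (e * t / s) ^ 2) := by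
    rw [norm_add_sq_real, norm_add_sq_real, norm_smul, inner_smul_right, real_inner_comm y w,
      mul_pow, Real.norm_of_nonneg (by positivity : 0 ≤ e ^ 2 / s ^ 2)]
    have hs2 : s ^ 4 = (e ^ 2 + t ^ 2) ^ 2 := by rw [h]; ring
    field_simp
    rw [← h]
    ring
  calc _ = ((2 * π * e ^ 2) ^ (-(n : ℝ) / 2) * (2 * π * t ^ 2) ^ (-(n : ℝ) / 2)) *
        Real.exp (-‖w‖ ^ 2 / (2 * e ^ 2) + -‖y + w‖ ^ 2 / (2 * t ^ 2)) := by
        rw [Real.exp_add]; ring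
    _ = _ := by rw [h1, h2, Real.exp_add]; ring

lemma gaussF_lintegral (n : ℕ) (σ : ℝ) (hσ : 0 < σ) :
    ∫⁻ w : EE n, ENNReal.ofReal (gaussF n σ w) = 1 := by
  have hb : 0 < 1 / (2 * σ ^ 2) := by positivity
  have h1 : ∫ w : EE n, gaussF n σ w = 1 := by
    unfold gaussF
    rw [integral_const_mul]
    have := GaussianFourier.integral_rexp_neg_mul_sq_norm (V := EE n) hb
    have h2 : ∀ w : EE n, -‖w‖ ^ 2 / (2 * σ ^ 2) = -(1 / (2 * σ ^ 2)) * ‖w‖ ^ 2 := by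
      intro w; ring
    simp_rw [h2]
    rw [this, show π / (1 / (2 * σ ^ 2)) = 2 * π * σ ^ 2 by field_simp, finrank_euclideanSpace_fin,
      ← Real.rpow_add (by positivity)]
    rw [show -(n : ℝ) / 2 + n / 2 = 0 by ring, Real.rpow_zero]
  have hi : Integrable (gaussF n σ) := by
    by_contra h
    rw [integral_undef h] at h1
    exact zero_ne_one h1
  rw [← ofReal_integral_eq_lintegral_ofReal hi (Eventually.of_forall (gaussF_nonneg n σ)), h1]
  simp

lemma gaussF_conv (n : ℕ) (s e t : ℝ) (hs : 0 < s) (he : 0 < e) (ht : 0 < t)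
    (h : e ^ 2 + t ^ 2 = s ^ 2) (y : EE n) :
    ∫⁻ w : EE n, ENNReal.ofReal (gaussF n e w) * ENNReal.ofReal (gaussF n t (y + w)) =
      ENNReal.ofReal (gaussF n s y) := by
  simp_rw [← ENNReal.ofReal_mul (gaussF_nonneg n e _),
    gauss_complete_square n s e t hs he ht h, ENNReal.ofReal_mul (gaussF_nonneg n s _)]
  rw [lintegral_const_mul' _ _ ENNReal.ofReal_ne_top,
    lintegral_add_right_eq_self (fun w => ENNReal.ofReal (gaussF n (e * t / s) w)),
    gaussF_lintegral n _ (by positivity), mul_one]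

lemma voronoi_isClosed (n : ℕ) (S : Set (EE n)) : IsClosed (voronoi n S) := by
  unfold voronoi
  simp only [Set.ofPred_forall]
  refine isClosed_iInter fun y => isClosed_iInter fun _ => ?_
  exact isClosed_le (by fun_prop) (by fun_prop)

lemma hyperplane_null (n : ℕ) (d : EE n) (hd : d ≠ 0) (c : ℝ) :
    volume {x : EE n | ⟪x, d⟫ = c} = 0 := by
  let A : AffineSubspace ℝ (EE n) :=
    { carrier := {x : EE n | ⟪x, d⟫ = c}
      smul_vsub_vadd_mem' := by
        intro r p q u hp hq hu
        simp only [Set.mem_ofPred_eq] at *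
        simp [inner_add_left, inner_sub_left, inner_smul_left, hp, hq, hu] }
  refine Measure.addHaar_affineSubspace volume A ?_
  intro hA
  have h0 : (0 : EE n) ∈ A := by rw [hA]; trivial
  have h1 : d ∈ A := by rw [hA]; trivial
  have h0' : ⟪(0 : EE n), d⟫ = c := h0
  have h1' : ⟪d, d⟫ = c := h1
  rw [inner_zero_left] at h0'
  rw [← h0'] at h1'
  exact hd (inner_self_eq_zero.1 h1')

instance lattice_vaddInvariant (n : ℕ) (L : Submodule ℤ (EE n)) :
    VAddInvariantMeasure L (EE n) volume where
  measure_preimage_vadd c s _ := measure_preimage_add volume (c : EE n) s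

lemma voronoi_fundamental (n : ℕ) (L : Submodule ℤ (EE n))
    [DiscreteTopology L] [IsZLattice ℝ L] :
    IsAddFundamentalDomain L (voronoi n (L : Set (EE n))) volume := by
  refine IsAddFundamentalDomain.mk'' (voronoi_isClosed n _).measurableSet.nullMeasurableSet
    (Eventually.of_forall fun x => ?_) ?_ ?_
  · have hc : IsClosed (L : Set (EE n)) := @AddSubgroup.isClosed_of_discrete _ _ _ _ _
      L.toAddSubgroup (inferInstanceAs (DiscreteTopology L))
    obtain ⟨y, hy, hxy⟩ := hc.exists_infDist_eq_dist ⟨0, L.zero_mem⟩ x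
    refine ⟨⟨-y, L.neg_mem hy⟩, ?_⟩
    intro z hz
    have h1 : dist x y ≤ dist x (y + z) := by
      rw [← hxy]; exact Metric.infDist_le_dist_of_mem (L.add_mem hy hz)
    rw [dist_eq_norm, dist_eq_norm] at h1
    have h2 : ‖x - y‖ ^ 2 ≤ ‖(x - y) - z‖ ^ 2 := by
      rw [sub_sub]; gcongr
    rw [norm_sub_sq_real (x - y) z] at h2
    have h3 : ((⟨-y, L.neg_mem hy⟩ : L) +ᵥ x : EE n) = x - y := by
      change -y + x = x - y
      abel
    rw [h3]
    linarith
  · intro g hg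
    have hg' : (g : EE n) ≠ 0 := by simpa using hg
    refine measure_mono_null ?_ (hyperplane_null n g hg' (‖(g : EE n)‖ ^ 2 / 2))
    rintro x ⟨⟨u, hu, rfl⟩, hx⟩
    have h1 := hx g g.2
    have h2 := hu (-g) (L.neg_mem g.2)
    change ⟪(g : EE n) + u, (g : EE n)⟫ ≤ _ at h1
    change ⟪(g : EE n) + u, (g : EE n)⟫ = _
    rw [inner_neg_right, norm_neg] at h2
    rw [inner_add_left, real_inner_self_eq_norm_sq] at *
    linarith
  · intro g
    exact (measurePreserving_vadd g volume).quasiMeasurePreserving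

/-- two expressions for the Gaussian mass of the lattice:
`f_{σ_s}(Λ) = ∫ f_{σ_eff}(w)·f_{√α·σ_s}(Λ+w) dw = ∫_{V(Λ)} f_{σ_eff}(Λ+w)·f_{√α·σ_s}(Λ+w) dw`. -/
theorem gauss_mass_integral_identities (n : ℕ) (L : Submodule ℤ (EuclideanSpace ℝ (Fin n)))
    [DiscreteTopology L] [IsZLattice ℝ L]
    (σs σw : ℝ) (hσs : 0 < σs) (hσw : 0 < σw)
    (α σeff : ℝ)
    (hα : α = σs ^ 2 / (σs ^ 2 + σw ^ 2))
    (hσeff : σeff = Real.sqrt (σs ^ 2 * σw ^ 2 / (σs ^ 2 + σw ^ 2))) :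
    gaussMass n σs (L : Set (EuclideanSpace ℝ (Fin n))) =
        ∫ w, gaussF n σeff w *
          gaussMass n (Real.sqrt α * σs) (coset n (L : Set (EuclideanSpace ℝ (Fin n))) w) ∧
      gaussMass n σs (L : Set (EuclideanSpace ℝ (Fin n))) =
        ∫ w in voronoi n (L : Set (EuclideanSpace ℝ (Fin n))),
          gaussMass n σeff (coset n (L : Set (EuclideanSpace ℝ (Fin n))) w) *
            gaussMass n (Real.sqrt α * σs) (coset n (L : Set (EuclideanSpace ℝ (Fin n))) w) := by
  have ht : 0 < Real.sqrt α * σs := by rw [hα]; positivity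
  have he : 0 < σeff := by rw [hσeff]; positivity
  have hsum : σeff ^ 2 + (Real.sqrt α * σs) ^ 2 = σs ^ 2 := by
    rw [hσeff, mul_pow, Real.sq_sqrt (by positivity), Real.sq_sqrt (by rw [hα]; positivity), hα]
    field_simp
    ring
  generalize Real.sqrt α * σs = t at *
  clear hα hσeff
  have : Countable L := inferInstance
  have hm : ∀ (σ : ℝ) (y : EE n), Measurable fun w : EE n => ENNReal.ofReal (gaussF n σ (y + w)) := by
    intro σ y
    exact (ENNReal.continuous_ofReal.comp
      ((gaussF_continuous n σ).comp (continuous_const.add continuous_id))).measurable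
  have hm0 : ∀ (σ : ℝ), Measurable fun w : EE n => ENNReal.ofReal (gaussF n σ w) := by
    intro σ
    exact (ENNReal.continuous_ofReal.comp (gaussF_continuous n σ)).measurable
  let G : ℝ → EE n → ℝ≥0∞ := fun σ w => ∑' y : L, ENNReal.ofReal (gaussF n σ (y + w))
  have hG : ∀ σ, Measurable (G σ) := fun σ => Measurable.tsum fun y => hm σ y
  have hGper : ∀ σ (g : L) (w : EE n), G σ (g + w) = G σ w := by
    intro σ g w
    change ∑' y : L, ENNReal.ofReal (gaussF n σ (y + (g + w))) = _
    change _ = ∑' y : L, ENNReal.ofReal (gaussF n σ (y + w))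
    rw [← (Equiv.addRight g).tsum_eq (fun y : L => ENNReal.ofReal (gaussF n σ (y + w)))]
    refine tsum_congr fun y => ?_
    simp [add_assoc]
  have I1 : ∫⁻ w, ENNReal.ofReal (gaussF n σeff w) * G t w =
      ∑' y : L, ENNReal.ofReal (gaussF n σs y) := by
    simp_rw [G, ← ENNReal.tsum_mul_left]
    refine (lintegral_tsum fun y : L => ((hm0 σeff).mul (hm t y)).aemeasurable).trans ?_
    exact tsum_congr fun y => gaussF_conv n σs σeff t hσs he ht hsum y
  have I2 : ∫⁻ w in voronoi n (L : Set (EE n)), G σeff w * G t w =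
      ∑' y : L, ENNReal.ofReal (gaussF n σs y) := by
    rw [← I1, (voronoi_fundamental n L).lintegral_eq_tsum'',
      ← lintegral_tsum fun y => ?_]
    · refine lintegral_congr fun w => ?_
      change G σeff w * G t w =
        ∑' g : L, ENNReal.ofReal (gaussF n σeff (g + w)) * G t (g + w)
      simp_rw [hGper]
      rw [ENNReal.tsum_mul_right]
    · exact ((hm σeff y).mul ((hG t).comp (measurable_const_add (y : EE n)))).aemeasurable
  have hfin : ∑' y : L, ENNReal.ofReal (gaussF n σs y) ≠ ∞ :=
    (gaussF_summable n σs hσs L).tsum_ofReal_ne_top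
  have m1 : Measurable fun w : EE n => ENNReal.ofReal (gaussF n σeff w) * G t w :=
    (hm0 σeff).mul (hG t)
  have m2 : Measurable fun w : EE n => G σeff w * G t w := (hG σeff).mul (hG t)
  constructor
  · rw [gaussMass_lattice, ← I1, ← integral_toReal m1.aemeasurable
      (ae_lt_top m1 (by rw [I1]; exact hfin))]
    refine integral_congr_ae (Eventually.of_forall fun w => ?_)
    simp only [gaussMass_coset, ENNReal.toReal_mul, ENNReal.toReal_ofReal (gaussF_nonneg n σeff w),
      G]
  · rw [gaussMass_lattice, ← I2, ← integral_toReal m2.aemeasurable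
      (ae_lt_top m2 (by rw [I2]; exact hfin))]
    refine integral_congr_ae (Eventually.of_forall fun w => ?_)
    simp only [gaussMass_coset, ENNReal.toReal_mul, G]
end
end
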